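/- Let Ω_D ⊂ ℝ² be open and bounded, and let K ⊂ Ω_D be compact. Then there exists δ > 0, depending only on K and Ω_D, such that for every ε ∈ (0,1] and every ξ₀ ∈ K there exists η ∈ ℝ³ with w^η(ξ) < 1 + ε for every ξ ∈ ∂Ω_D and w^η(ξ₀) ≥ 1 + ε + δ. (In particular, the sub-solution barrier w⁻ := sup{w^η : η ∈ ℝ³, w^η < 1 + ε on ∂Ω_D} satisfies w⁻ ≥ 1 + ε + δ on K, with δ independent of ε.) -/

import Mathlib

open Real Set

/-!
The function `w^η` is the linear functional `⟪η, ·⟫` restricted to the unit sphere, read in the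
gnomonic chart `x ↦ (x, 1) / √(1 + ‖x‖²)` of the upper hemisphere. This chart is an embedding, so
the images of the compact set `K` and of `∂Ω` are at a positive distance `r`. On the unit sphere,
distance at least `r` means inner product at most `1 - δ` with `δ = r² / 2`; hence
`η := (1 + ε + δ) u` is a barrier at the unit vector `u`, because
`(1 + ε + δ) (1 - δ) = 1 + ε - ε δ - δ² < 1 + ε`.
-/

section UnitSphere

variable {H : Type*} [SeminormedAddCommGroup H] [InnerProductSpace ℝ H]

theorem inner_le_one_sub_of_le_norm_sub {u v : H} {r : ℝ} (hu : ‖u‖ = 1) (hv : ‖v‖ = 1)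
    (hr : 0 ≤ r) (h : r ≤ ‖u - v‖) : inner ℝ u v ≤ 1 - r ^ 2 / 2 := by
  have hsq : r ^ 2 ≤ ‖u - v‖ ^ 2 := by gcongr
  rw [norm_sub_sq_real, hu, hv] at hsq
  linarith

theorem exists_pos_forall_inner_le_one_sub {S T : Set H} (hS : IsCompact S)
    (hST : Disjoint S (closure T)) (hS₁ : ∀ u ∈ S, ‖u‖ = 1) (hT₁ : ∀ v ∈ T, ‖v‖ = 1) :
    ∃ δ : ℝ, 0 < δ ∧ ∀ u ∈ S, ∀ v ∈ T, inner ℝ u v ≤ 1 - δ := by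
  obtain ⟨r, hr, hdist⟩ := Metric.exists_pos_forall_lt_edist hS isClosed_closure hST
  refine ⟨r ^ 2 / 2, by positivity, fun u hu v hv ↦ ?_⟩
  refine inner_le_one_sub_of_le_norm_sub (hS₁ u hu) (hT₁ v hv) r.coe_nonneg ?_
  have huv := (hdist u hu v (subset_closure hv)).le
  rwa [edist_nndist, ENNReal.coe_le_coe, ← NNReal.coe_le_coe, coe_nndist, dist_eq_norm] at huv

theorem exists_inner_barrier {S T : Set H} (hS : IsCompact S)
    (hST : Disjoint S (closure T)) (hS₁ : ∀ u ∈ S, ‖u‖ = 1) (hT₁ : ∀ v ∈ T, ‖v‖ = 1) :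
    ∃ δ : ℝ, 0 < δ ∧ ∀ ε : ℝ, 0 ≤ ε → ∀ u ∈ S, ∃ η : H,
      (∀ v ∈ T, inner ℝ η v < 1 + ε) ∧ 1 + ε + δ ≤ inner ℝ η u := by
  obtain ⟨δ, hδ, hle⟩ := exists_pos_forall_inner_le_one_sub hS hST hS₁ hT₁
  refine ⟨δ, hδ, fun ε hε u hu ↦ ⟨(1 + ε + δ) • u, fun v hv ↦ ?_, ?_⟩⟩
  · calc
      inner ℝ ((1 + ε + δ) • u) v = (1 + ε + δ) * inner ℝ u v := real_inner_smul_left ..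
      _ ≤ (1 + ε + δ) * (1 - δ) := by gcongr; exact hle u hu v hv
      _ < 1 + ε := by nlinarith
  · rw [real_inner_smul_left, real_inner_self_eq_norm_sq, hS₁ u hu]
    linarith

end UnitSphere

theorem disjoint_image_closure_image_of_isInducing {X Y : Type*} [TopologicalSpace X]
    [TopologicalSpace Y] {f : X → Y} (hf : Topology.IsInducing f) {s t : Set X}
    (hst : Disjoint s (closure t)) : Disjoint (f '' s) (closure (f '' t)) := by
  rwa [disjoint_image_left, ← hf.closure_eq_preimage_closure_image]

section HemisphereLift

variable {E : Type*} [NormedAddCommGroup E] [InnerProductSpace ℝ E]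

/-- The inverse gnomonic projection, sending `x` to the unit vector in the direction `(x, 1)`. The
`L²` product makes `E × ℝ` an inner product space. -/
noncomputable def hemisphereLift (x : E) : WithLp 2 (E × ℝ) :=
  (√(1 + ‖x‖ ^ 2))⁻¹ • WithLp.toLp 2 (x, 1)

theorem norm_hemisphereLift (x : E) : ‖hemisphereLift x‖ = 1 := by
  have hnorm : ‖WithLp.toLp 2 (x, (1 : ℝ))‖ = √(1 + ‖x‖ ^ 2) := by
    simp [WithLp.prod_norm_eq_of_L2, add_comm]
  rw [hemisphereLift, norm_smul, hnorm, norm_inv, norm_of_nonneg (sqrt_nonneg _),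
    inv_mul_cancel₀ (by positivity)]

theorem inner_hemisphereLift (η : WithLp 2 (E × ℝ)) (x : E) :
    inner ℝ η (hemisphereLift x) = (inner ℝ η.fst x + η.snd) / √(1 + ‖x‖ ^ 2) := by
  simp [hemisphereLift, real_inner_smul_right, WithLp.prod_inner_apply, div_eq_inv_mul,
    mul_add]

-- The first component is Mathlib's homeomorphism of `E` with its open unit ball.
theorem isInducing_hemisphereLift : Topology.IsInducing (hemisphereLift (E := E)) := by
  have hcont : Continuous (hemisphereLift (E := E)) := by
    unfold hemisphereLift
    fun_prop (disch := intro; positivity)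
  refine .of_comp hcont (WithLp.continuous_fst 2 E ℝ) ?_
  exact Topology.IsInducing.subtypeVal.comp Homeomorph.unitBall.isInducing

end HemisphereLift

-- The map `φ` lets the statement cover `ℝ × ℝ`, whose own norm is not Euclidean.
theorem interior_subsolution_barrier_general {X E : Type*} [TopologicalSpace X]
    [NormedAddCommGroup E] [InnerProductSpace ℝ E] {φ : X → E} (hφ : Topology.IsInducing φ)
    {Ω K : Set X} (hK : IsCompact K) (hKΩ : K ⊆ interior Ω) :
    ∃ δ : ℝ, 0 < δ ∧ ∀ ε : ℝ, 0 ≤ ε → ∀ x₀ ∈ K, ∃ (η : E) (c : ℝ),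
      (∀ x ∈ frontier Ω, (inner ℝ η (φ x) + c) / √(1 + ‖φ x‖ ^ 2) < 1 + ε) ∧
      1 + ε + δ ≤ (inner ℝ η (φ x₀) + c) / √(1 + ‖φ x₀‖ ^ 2) := by
  have hlift := isInducing_hemisphereLift.comp hφ
  have hdisj : Disjoint K (closure (frontier Ω)) := by
    rw [isClosed_frontier.closure_eq]
    exact disjoint_interior_frontier.mono_left hKΩ
  obtain ⟨δ, hδ, hbarrier⟩ := exists_inner_barrier (hK.image hlift.continuous)
    (disjoint_image_closure_image_of_isInducing hlift hdisj)
    (forall_mem_image.2 fun x _ ↦ norm_hemisphereLift (φ x))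
    (forall_mem_image.2 fun x _ ↦ norm_hemisphereLift (φ x))
  refine ⟨δ, hδ, fun ε hε x₀ hx₀ ↦ ?_⟩
  obtain ⟨η, hη, hη₀⟩ := hbarrier ε hε _ (mem_image_of_mem _ hx₀)
  simp only [forall_mem_image, Function.comp_apply, inner_hemisphereLift] at hη hη₀
  exact ⟨η.fst, η.snd, hη, hη₀⟩

/-- Interior sub-solution barrier (inequality (3.32)): for an open bounded `Ω_D` and
a compact `K ⊂ Ω_D` there is `δ > 0`, depending only on `K` and `Ω_D`, such that for
every `ε ∈ (0,1]` and every `ξ₀ ∈ K` there is `η ∈ ℝ³` with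
`w^η = (η₁ξ₁+η₂ξ₂+η₃)/√(1+|ξ|²) < 1+ε` on `∂Ω_D` and `w^η(ξ₀) ≥ 1+ε+δ`. -/
theorem interior_subsolution_barrier
    (ΩD : Set (ℝ × ℝ)) (hΩo : IsOpen ΩD) (hΩb : Bornology.IsBounded ΩD)
    (K : Set (ℝ × ℝ)) (hK : IsCompact K) (hKΩ : K ⊆ ΩD) :
    ∃ δ : ℝ, 0 < δ ∧
      ∀ ε : ℝ, 0 < ε → ε ≤ 1 →
      ∀ ξ0 ∈ K, ∃ η1 η2 η3 : ℝ,
        (∀ ξ ∈ frontier ΩD,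
          (η1 * ξ.1 + η2 * ξ.2 + η3) / Real.sqrt (1 + ξ.1 ^ 2 + ξ.2 ^ 2) < 1 + ε) ∧
        1 + ε + δ ≤
          (η1 * ξ0.1 + η2 * ξ0.2 + η3) / Real.sqrt (1 + ξ0.1 ^ 2 + ξ0.2 ^ 2) := by
  obtain ⟨δ, hδ, h⟩ := interior_subsolution_barrier_general
    (WithLp.homeomorphProd 2 ℝ ℝ).symm.isInducing hK (hKΩ.trans hΩo.interior_eq.ge)
  refine ⟨δ, hδ, fun ε hε _ ξ0 hξ0 ↦ ?_⟩
  obtain ⟨η, c, hη⟩ := h ε hε.le ξ0 hξ0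
  exact ⟨η.fst, η.snd, c, by
    simpa [WithLp.homeomorphProd, WithLp.prod_norm_sq_eq_of_L2, mul_comm, add_assoc] using hη⟩
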